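/- Let A = (Q, X, q₀, T, F) be an updateable timed automaton in which all guards are conjunctions of non-diagonal constraints and every atomic update is of the form x := c, x := y, or x := y + c with c ≥ 0. Then the least solution {G(q)}_{q ∈ Q} of the state-based guard equations for updateable timed automata is finite: every constraint occurring in any G(q) has its constant bounded in absolute value by 2M, where M is the maximum absolute value of a constant occurring in a guard or update of A, so each G(q) is a finite set. -/

import Mathlib

open scoped NNReal

/-! ## Atomic constraints over a set of clocks -/

/-- Comparison operator `◁ ∈ {<, ≤}`. -/
inductive Ineq : Type where
  | lt : Ineq
  | le : Ineq
deriving DecidableEq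

/-- Interpretation of a comparison operator on reals. -/
def Ineq.holds : Ineq → ℝ → ℝ → Prop
  | .lt, a, b => a < b
  | .le, a, b => a ≤ b

/-- Atomic constraints over clocks `X`:
`upper x o c` is `x ◁ c` (c ∈ ℕ), `lower c o x` is `c ◁ x` (c ∈ ℕ),
`diag x y o d` is `x - y ◁ d` (d ∈ ℤ). -/
inductive Constr (X : Type) : Type where
  | upper : X → Ineq → ℕ → Constr X
  | lower : ℕ → Ineq → X → Constr X
  | diag : X → X → Ineq → ℤ → Constr X
deriving DecidableEq

namespace Constr

/-- Is the constraint a diagonal constraint `x - y ◁ d`? -/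
def isDiag {X : Type} : Constr X → Bool
  | .diag _ _ _ _ => true
  | _ => false

/-- The integer constant of a constraint. -/
def constOf {X : Type} : Constr X → ℤ
  | .upper _ _ c => (c : ℤ)
  | .lower c _ _ => (c : ℤ)
  | .diag _ _ _ d => d

/-- Satisfaction of a constraint by a clock valuation `v : X → ℝ≥0`. -/
def sat {X : Type} (v : X → ℝ≥0) : Constr X → Prop
  | .upper x o c => o.holds (v x : ℝ) (c : ℝ)
  | .lower c o x => o.holds (c : ℝ) (v x : ℝ)
  | .diag x y o d => o.holds ((v x : ℝ) - (v y : ℝ)) (d : ℝ)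

end Constr

/-- Time elapse: `v + δ`. -/
def shift {X : Type} (v : X → ℝ≥0) (δ : ℝ≥0) : X → ℝ≥0 := fun x => v x + δ

/-- The relation `v ⊑_G v'`: for all `φ ∈ G` and all delays `δ ≥ 0`,
`v + δ ⊨ φ` implies `v' + δ ⊨ φ`. -/
def simG {X : Type} (G : Set (Constr X)) (v v' : X → ℝ≥0) : Prop :=
  ∀ φ ∈ G, ∀ δ : ℝ≥0, Constr.sat (shift v δ) φ → Constr.sat (shift v' δ) φ

/-- `Z ⊑_G Z'` on sets of valuations. -/
def simGZ {X : Type} (G : Set (Constr X)) (Z Z' : Set (X → ℝ≥0)) : Prop :=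
  ∀ v ∈ Z, ∃ v' ∈ Z', simG G v v'

open Classical in
/-- `[R]v`: reset the clocks in `R` to `0`. -/
noncomputable def reset {X : Type} (R : Set X) (v : X → ℝ≥0) : X → ℝ≥0 :=
  fun x => if x ∈ R then 0 else v x

/-- Weakest precondition `wp(⊑_φ, R)` of a single constraint over a reset. -/
def wpReset {X : Type} (R : Set X) : Constr X → Set (Constr X)
  | .upper x o c => {ψ | x ∉ R ∧ ψ = .upper x o c}
  | .lower c o x => {ψ | x ∉ R ∧ ψ = .lower c o x}
  | .diag x y o d =>
      {ψ | (x ∉ R ∧ y ∉ R ∧ ψ = .diag x y o d) ∨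
           (x ∉ R ∧ y ∈ R ∧ 0 ≤ d ∧ ψ = .upper x o d.toNat) ∨
           (x ∈ R ∧ y ∉ R ∧ 0 ≤ -d ∧ ψ = .lower (-d).toNat o y)}

/-- Weakest precondition `wp(⊑_G, R)` of a set of constraints over a reset. -/
def wpResetSet {X : Type} (R : Set X) (G : Set (Constr X)) : Set (Constr X) :=
  ⋃ φ ∈ G, wpReset R φ

/-! ## Timed automata -/

/-- A transition: source state, guard (finite conjunction of constraints),
reset set, target state. -/
abbrev TTrans (Q X : Type) : Type := Q × Finset (Constr X) × Set X × Q

def TTrans.src {Q X : Type} (t : TTrans Q X) : Q := t.1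
def TTrans.grd {Q X : Type} (t : TTrans Q X) : Finset (Constr X) := t.2.1
def TTrans.rst {Q X : Type} (t : TTrans Q X) : Set X := t.2.2.1
def TTrans.tgt {Q X : Type} (t : TTrans Q X) : Q := t.2.2.2

/-- A timed automaton. -/
structure TA (Q X : Type) : Type where
  init : Q
  trans : Finset (TTrans Q X)
  acc : Set Q

/-- Action step of a timed automaton along transition `t`. -/
def Step {Q X : Type} (A : TA Q X) (t : TTrans Q X) (c c' : Q × (X → ℝ≥0)) : Prop :=
  t ∈ A.trans ∧ TTrans.src t = c.1 ∧ (∀ φ ∈ TTrans.grd t, Constr.sat c.2 φ) ∧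
    c'.1 = TTrans.tgt t ∧ c'.2 = reset (TTrans.rst t) c.2

/-- `r` is a simulation on the configurations of `A`: a reflexive transitive
relation, relating only configurations with equal states, compatible with
delays and action transitions. -/
def IsSimulation {Q X : Type} (A : TA Q X)
    (r : (Q × (X → ℝ≥0)) → (Q × (X → ℝ≥0)) → Prop) : Prop :=
  Reflexive r ∧ Transitive r ∧
  ∀ q v q' v', r (q, v) (q', v') →
    q = q' ∧
    (∀ δ : ℝ≥0, ∃ δ' : ℝ≥0, r (q, shift v δ) (q, shift v' δ')) ∧
    (∀ t c₁, Step A t (q, v) c₁ →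
      ∃ v₁', Step A t (q, v') (c₁.1, v₁') ∧ r c₁ (c₁.1, v₁'))

/-- The state-based guard equations:
`G(q) = ⋃_{(q,g,R,q₁) ∈ T} ({g} ∪ wp(⊑_{G(q₁)}, R))`. -/
def GuardEq {Q X : Type} (A : TA Q X) (G : Q → Set (Constr X)) : Prop :=
  ∀ q, G q = ⋃ t ∈ A.trans, ⋃ (_ : TTrans.src t = q),
    ((TTrans.grd t : Set (Constr X)) ∪ wpResetSet (TTrans.rst t) (G (TTrans.tgt t)))

/-! ## LU bounds -/

def lowerConstAt {X : Type} [DecidableEq X] (x : X) : Constr X → WithBot ℕ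
  | .lower c _ y => if y = x then (c : WithBot ℕ) else ⊥
  | _ => ⊥

def upperConstAt {X : Type} [DecidableEq X] (x : X) : Constr X → WithBot ℕ
  | .upper y _ c => if y = x then (c : WithBot ℕ) else ⊥
  | _ => ⊥

/-- `L_G(x)`: maximum constant among lower-bound constraints `c ◁ x` in `G`
(`⊥ = -∞` if none). -/
def Lbound {X : Type} [DecidableEq X] (G : Finset (Constr X)) (x : X) : WithBot ℕ :=
  G.sup (lowerConstAt x)

/-- `U_G(x)`: maximum constant among upper-bound constraints `x ◁ c` in `G`
(`⊥ = -∞` if none). -/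
def Ubound {X : Type} [DecidableEq X] (G : Finset (Constr X)) (x : X) : WithBot ℕ :=
  G.sup (upperConstAt x)

/-- The LU simulation `v ≼_LU v'` for bounds functions `L U : X → ℕ ∪ {-∞}`. -/
def luSim {X : Type} (L U : X → WithBot ℕ) (v v' : X → ℝ≥0) : Prop :=
  ∀ x : X,
    (v' x < v x → (L x).map (fun c : ℕ => (c : ℝ)) < ((v' x : ℝ) : WithBot ℝ)) ∧
    (v x < v' x → (U x).map (fun c : ℕ => (c : ℝ)) < ((v x : ℝ) : WithBot ℝ))

/-- The relation `v ⊑^LU_G v'`: `v ≼_{LU(G)} v'` and every diagonal constraint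
of `G` satisfied by `v` is satisfied by `v'`. -/
def luglu {X : Type} [DecidableEq X] (G : Finset (Constr X)) (v v' : X → ℝ≥0) : Prop :=
  luSim (Lbound G) (Ubound G) v v' ∧
    ∀ φ ∈ G, φ.isDiag → Constr.sat v φ → Constr.sat v' φ

/-- Lifting a relation on valuations to sets of valuations. -/
def zoneRel {X : Type} (r : (X → ℝ≥0) → (X → ℝ≥0) → Prop) (Z Z' : Set (X → ℝ≥0)) : Prop :=
  ∀ v ∈ Z, ∃ v' ∈ Z', r v v'

/-! ## Runs of timed automata -/

/-- `stepsFrom A c l`: the alternating delay-action sequence `l` is a valid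
sequence of steps of `A` starting at configuration `c`. -/
def stepsFrom {Q X : Type} (A : TA Q X) :
    (Q × (X → ℝ≥0)) → List (ℝ≥0 × TTrans Q X) → Prop
  | _, [] => True
  | c, (δ, t) :: l =>
      t ∈ A.trans ∧ TTrans.src t = c.1 ∧
      (∀ φ ∈ TTrans.grd t, Constr.sat (shift c.2 δ) φ) ∧
      stepsFrom A (TTrans.tgt t, reset (TTrans.rst t) (shift c.2 δ)) l

/-- Configuration reached after a sequence of delay-action steps. -/
noncomputable def endConfig {Q X : Type} :
    (Q × (X → ℝ≥0)) → List (ℝ≥0 × TTrans Q X) → (Q × (X → ℝ≥0))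
  | c, [] => c
  | c, (δ, t) :: l => endConfig (TTrans.tgt t, reset (TTrans.rst t) (shift c.2 δ)) l

/-- A run of `A`: a valid sequence of delay-action steps from `(q₀, 0̄)`. -/
def TA.Run {Q X : Type} (A : TA Q X) : Type :=
  {l : List (ℝ≥0 × TTrans Q X) // stepsFrom A (A.init, fun _ => 0) l}

/-- A run is accepting if it ends in an accepting state. -/
def TA.Accepting {Q X : Type} (A : TA Q X) (r : A.Run) : Prop :=
  (endConfig (A.init, fun _ => 0) r.val).1 ∈ A.acc

/-- `A` is diagonal-free: no guard contains a diagonal constraint. -/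
def DiagFree {Q X : Type} (A : TA Q X) : Prop :=
  ∀ t ∈ A.trans, ∀ φ ∈ TTrans.grd t, ¬ φ.isDiag

/-- The (finite) set of diagonal constraints occurring in guards of `A`. -/
def diagGuards {Q X : Type} [DecidableEq X] (A : TA Q X) : Finset (Constr X) :=
  A.trans.biUnion fun t => (TTrans.grd t).filter fun φ => φ.isDiag

/-! ## Updateable timed automata -/

/-- Atomic update of a clock: `x := c` or `x := y + d`. -/
inductive AtomicUp (X : Type) : Type where
  | const : ℕ → AtomicUp X
  | add : X → ℤ → AtomicUp X
deriving DecidableEq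

/-- `up(v) : X → ℝ` (may be negative). -/
def applyUpd {X : Type} (up : X → AtomicUp X) (v : X → ℝ≥0) : X → ℝ :=
  fun x => match up x with
    | .const c => (c : ℝ)
    | .add y d => (v y : ℝ) + (d : ℝ)

/-- Weakest precondition `wp(⊑_φ, up)` of a single constraint over an update. -/
def wpUpd {X : Type} [DecidableEq X] (up : X → AtomicUp X) : Constr X → Set (Constr X)
  | .upper x o c =>
      match up x with
      | .const _ => ∅
      | .add y d => if 0 ≤ (c : ℤ) - d then {Constr.upper y o ((c : ℤ) - d).toNat} else ∅
  | .lower c o x =>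
      match up x with
      | .const _ => ∅
      | .add y d => if 0 ≤ (c : ℤ) - d then {Constr.lower ((c : ℤ) - d).toNat o y} else ∅
  | .diag x y o c =>
      match up x, up y with
      | .const _, .const _ => ∅
      | .add y₁ d₁, .const c₂ =>
          if 0 ≤ c + (c₂ : ℤ) - d₁ then {Constr.upper y₁ o (c + (c₂ : ℤ) - d₁).toNat} else ∅
      | .const c₁, .add y₂ d₂ =>
          if 0 ≤ (c₁ : ℤ) - d₂ - c then {Constr.lower ((c₁ : ℤ) - d₂ - c).toNat o y₂} else ∅
      | .add y₁ d₁, .add y₂ d₂ =>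
          if y₁ = y₂ then ∅ else {Constr.diag y₁ y₂ o (c - d₁ + d₂)}

/-- Weakest precondition `wp(⊑_G, up)` of a set of constraints over an update. -/
def wpUpdSet {X : Type} [DecidableEq X] (up : X → AtomicUp X) (G : Set (Constr X)) :
    Set (Constr X) :=
  ⋃ φ ∈ G, wpUpd up φ

/-- The set of constraints `{0 ≤ x | x ∈ X}`. -/
def nonnegConstrs (X : Type) : Set (Constr X) := {φ | ∃ x : X, φ = Constr.lower 0 Ineq.le x}

/-- A transition of an updateable timed automaton: source, guard, update, target. -/
abbrev UTrans (Q X : Type) : Type := Q × Finset (Constr X) × (X → AtomicUp X) × Q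

def UTrans.src {Q X : Type} (t : UTrans Q X) : Q := t.1
def UTrans.grd {Q X : Type} (t : UTrans Q X) : Finset (Constr X) := t.2.1
def UTrans.upd {Q X : Type} (t : UTrans Q X) : X → AtomicUp X := t.2.2.1
def UTrans.tgt {Q X : Type} (t : UTrans Q X) : Q := t.2.2.2

/-- An updateable timed automaton. -/
structure UTA (Q X : Type) : Type where
  init : Q
  trans : Finset (UTrans Q X)
  acc : Set Q

/-- Action step of an updateable timed automaton along transition `t`:
the guard holds, `up(v) ≥ 0`, and the new valuation is `up(v)`. -/
def UStep {Q X : Type} (A : UTA Q X) (t : UTrans Q X) (c c' : Q × (X → ℝ≥0)) : Prop :=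
  t ∈ A.trans ∧ UTrans.src t = c.1 ∧ (∀ φ ∈ UTrans.grd t, Constr.sat c.2 φ) ∧
    c'.1 = UTrans.tgt t ∧ ∀ x, (c'.2 x : ℝ) = applyUpd (UTrans.upd t) c.2 x

/-- `r` is a simulation on configurations of an updateable timed automaton. -/
def IsSimulationU {Q X : Type} (A : UTA Q X)
    (r : (Q × (X → ℝ≥0)) → (Q × (X → ℝ≥0)) → Prop) : Prop :=
  Reflexive r ∧ Transitive r ∧
  ∀ q v q' v', r (q, v) (q', v') →
    q = q' ∧
    (∀ δ : ℝ≥0, ∃ δ' : ℝ≥0, r (q, shift v δ) (q, shift v' δ')) ∧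
    (∀ t c₁, UStep A t (q, v) c₁ →
      ∃ v₁', UStep A t (q, v') (c₁.1, v₁') ∧ r c₁ (c₁.1, v₁'))

/-- State-based guard equations for updateable timed automata. -/
def GuardEqU {Q X : Type} [DecidableEq X] (A : UTA Q X) (G : Q → Set (Constr X)) : Prop :=
  ∀ q, G q = ⋃ t ∈ A.trans, ⋃ (_ : UTrans.src t = q),
    ((UTrans.grd t : Set (Constr X)) ∪ wpUpdSet (UTrans.upd t) (nonnegConstrs X)
      ∪ wpUpdSet (UTrans.upd t) (G (UTrans.tgt t)))

/-- Kleene iterates `G^i(q)` of the state-based guard equations. -/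
def iterG {Q X : Type} [DecidableEq X] (A : UTA Q X) : ℕ → Q → Set (Constr X)
  | 0 => fun q => ⋃ t ∈ A.trans, ⋃ (_ : UTrans.src t = q),
      ((UTrans.grd t : Set (Constr X)) ∪ wpUpdSet (UTrans.upd t) (nonnegConstrs X))
  | (i + 1) => fun q => iterG A i q ∪
      (⋃ t ∈ A.trans, ⋃ (_ : UTrans.src t = q),
        wpUpdSet (UTrans.upd t) (iterG A i (UTrans.tgt t)))

/-- `G^{i+1}(q)` is coloured red: a new diagonal constraint was added, or a new
non-diagonal constraint whose constant is strictly bigger than the constant of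
every non-diagonal constraint of the same kind on the same clock in `G^i(q)`. -/
def RedAt {Q X : Type} [DecidableEq X] (A : UTA Q X) : ℕ → Q → Prop
  | 0, _ => False
  | (i + 1), q =>
      (∃ φ : Constr X, φ ∈ iterG A (i + 1) q ∧ φ ∉ iterG A i q ∧ φ.isDiag) ∨
      (∃ (x : X) (o : Ineq) (c : ℕ),
        Constr.upper x o c ∈ iterG A (i + 1) q ∧ Constr.upper x o c ∉ iterG A i q ∧
        ∀ (o' : Ineq) (c' : ℕ), Constr.upper x o' c' ∈ iterG A i q → c' < c) ∨
      (∃ (x : X) (o : Ineq) (c : ℕ),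
        Constr.lower c o x ∈ iterG A (i + 1) q ∧ Constr.lower c o x ∉ iterG A i q ∧
        ∀ (o' : Ineq) (c' : ℕ), Constr.lower c' o' x ∈ iterG A i q → c' < c)

/-- `G^i(q)` is coloured green. -/
def GreenAt {Q X : Type} [DecidableEq X] (A : UTA Q X) (i : ℕ) (q : Q) : Prop :=
  ¬ RedAt A i q

/-- Absolute value of the constant of an atomic update. -/
def updBound {X : Type} : AtomicUp X → ℕ
  | .const c => c
  | .add _ d => d.natAbs

/-! ## The statement -/

/-! The weakest precondition of `x ◁ c` or `c ◁ x` across `x := y + d` is the same comparison of `y`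
with `c - d`. When `d ≥ 0` the constant does not grow, and it stays nonnegative because `wp`
discards negative ones. So for a bound `M` on the guards, the non-diagonal constraints with constant
at most `M` form a prefixed point of the guard equations, and Knaster–Tarski puts the least
solution below it. -/

namespace AtomicUp

/-- The atomic updates `x := c` and `x := y + d` with `d ≥ 0`, those allowed by the theorem. The
case `x := y` is `d = 0`. -/
def IsNonneg {X : Type} (u : AtomicUp X) : Prop :=
  (∃ c : ℕ, u = const c) ∨ ∃ (y : X) (d : ℤ), u = add y d ∧ 0 ≤ d

theorem IsNonneg.nonneg_of_eq_add {X : Type} {u : AtomicUp X} (hu : u.IsNonneg) {y : X} {d : ℤ}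
    (h : u = add y d) : 0 ≤ d := by
  rcases hu with ⟨c, rfl⟩ | ⟨z, e, rfl, he⟩
  · cases h
  · cases h
    exact he

end AtomicUp

instance : Finite Ineq :=
  .of_surjective (fun b : Bool => if b then Ineq.lt else Ineq.le) fun
    | .lt => ⟨true, rfl⟩
    | .le => ⟨false, rfl⟩

/-- The non-diagonal constraints over `X` with constant at most `M`, the finite set in which all
the guard sets `G(q)` are shown to lie. -/
def nondiagConstrs (X : Type) (M : ℕ) : Set (Constr X) :=
  {φ | ¬ φ.isDiag ∧ φ.constOf.natAbs ≤ M}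

section NondiagConstrs

variable {X : Type} {M : ℕ}

theorem upper_mem_nondiagConstrs {x : X} {o : Ineq} {c : ℕ} :
    Constr.upper x o c ∈ nondiagConstrs X M ↔ c ≤ M := by
  simp [nondiagConstrs, Constr.isDiag, Constr.constOf]

theorem lower_mem_nondiagConstrs {x : X} {o : Ineq} {c : ℕ} :
    Constr.lower c o x ∈ nondiagConstrs X M ↔ c ≤ M := by
  simp [nondiagConstrs, Constr.isDiag, Constr.constOf]

theorem diag_notMem_nondiagConstrs {x y : X} {o : Ineq} {d : ℤ} :
    Constr.diag x y o d ∉ nondiagConstrs X M := by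
  simp [nondiagConstrs, Constr.isDiag]

theorem nonnegConstrs_subset_nondiagConstrs : nonnegConstrs X ⊆ nondiagConstrs X M := by
  rintro _ ⟨x, rfl⟩
  exact lower_mem_nondiagConstrs.2 M.zero_le

theorem finite_nondiagConstrs (X : Type) [Finite X] (M : ℕ) : (nondiagConstrs X M).Finite := by
  have hparams : (Set.univ ×ˢ Set.Iic M : Set ((X × Ineq) × ℕ)).Finite :=
    Set.finite_univ.prod (Set.finite_Iic M)
  refine ((hparams.image fun p => Constr.upper p.1.1 p.1.2 p.2).union
    (hparams.image fun p => Constr.lower p.2 p.1.2 p.1.1)).subset fun φ hφ => ?_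
  cases φ with
  | upper x o c => exact .inl ⟨((x, o), c), ⟨trivial, upper_mem_nondiagConstrs.1 hφ⟩, rfl⟩
  | lower c o x => exact .inr ⟨((x, o), c), ⟨trivial, lower_mem_nondiagConstrs.1 hφ⟩, rfl⟩
  | diag => exact absurd hφ diag_notMem_nondiagConstrs

end NondiagConstrs

section WeakestPrecondition

variable {X : Type} [DecidableEq X] {up : X → AtomicUp X}

theorem mem_wpUpd_upper {x : X} {o : Ineq} {c : ℕ} {ψ : Constr X} :
    ψ ∈ wpUpd up (.upper x o c) ↔
      ∃ (y : X) (d : ℤ) (c' : ℕ), up x = .add y d ∧ (c : ℤ) = c' + d ∧ ψ = .upper y o c' := by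
  cases hx : up x <;> grind [wpUpd]

theorem mem_wpUpd_lower {x : X} {o : Ineq} {c : ℕ} {ψ : Constr X} :
    ψ ∈ wpUpd up (.lower c o x) ↔
      ∃ (y : X) (d : ℤ) (c' : ℕ), up x = .add y d ∧ (c : ℤ) = c' + d ∧ ψ = .lower c' o y := by
  cases hx : up x <;> grind [wpUpd]

theorem wpUpd_subset_nondiagConstrs {M : ℕ} (hup : ∀ x, (up x).IsNonneg) {φ : Constr X}
    (hφ : φ ∈ nondiagConstrs X M) : wpUpd up φ ⊆ nondiagConstrs X M := by
  intro ψ hψ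
  cases φ with
  | upper x o c =>
    obtain ⟨y, d, c', hx, hc, rfl⟩ := mem_wpUpd_upper.1 hψ
    have hd : 0 ≤ d := (hup x).nonneg_of_eq_add hx
    have hcM : c ≤ M := upper_mem_nondiagConstrs.1 hφ
    exact upper_mem_nondiagConstrs.2 (by omega)
  | lower c o x =>
    obtain ⟨y, d, c', hx, hc, rfl⟩ := mem_wpUpd_lower.1 hψ
    have hd : 0 ≤ d := (hup x).nonneg_of_eq_add hx
    have hcM : c ≤ M := lower_mem_nondiagConstrs.1 hφ
    exact lower_mem_nondiagConstrs.2 (by omega)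
  | diag => exact absurd hφ diag_notMem_nondiagConstrs

theorem wpUpdSet_mono : Monotone (wpUpdSet up) :=
  fun _ _ h => Set.biUnion_mono h fun _ _ => subset_rfl

theorem wpUpdSet_nondiagConstrs_subset {M : ℕ} (hup : ∀ x, (up x).IsNonneg) :
    wpUpdSet up (nondiagConstrs X M) ⊆ nondiagConstrs X M :=
  Set.iUnion₂_subset fun _ => wpUpd_subset_nondiagConstrs hup

end WeakestPrecondition

section GuardEquations

variable {Q X : Type} [DecidableEq X] {A : UTA Q X}

/-- The monotone operator on families of constraint sets given by the right-hand side of the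
state-based guard equations. -/
def guardStep (A : UTA Q X) : (Q → Set (Constr X)) →o (Q → Set (Constr X)) where
  toFun G q := ⋃ t ∈ A.trans, ⋃ (_ : UTrans.src t = q),
    ((UTrans.grd t : Set (Constr X)) ∪ wpUpdSet (UTrans.upd t) (nonnegConstrs X)
      ∪ wpUpdSet (UTrans.upd t) (G (UTrans.tgt t)))
  monotone' _ _ h _ := Set.iUnion₂_mono fun t _ => Set.iUnion_mono fun _ =>
    Set.union_subset_union_right _ (wpUpdSet_mono (h (UTrans.tgt t)))

theorem guardEqU_iff_isFixedPt {G : Q → Set (Constr X)} :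
    GuardEqU A G ↔ Function.IsFixedPt (guardStep A) G :=
  funext_iff.symm.trans eq_comm

theorem le_of_isLeast_guardEqU_of_guardStep_le {G S : Q → Set (Constr X)}
    (hG : IsLeast {G' | GuardEqU A G'} G) (hS : guardStep A S ≤ S) : G ≤ S :=
  calc
    G ≤ (guardStep A).lfp := hG.2 (guardEqU_iff_isFixedPt.2 (guardStep A).isFixedPt_lfp)
    _ ≤ S := (guardStep A).lfp_le hS

theorem guardStep_nondiagConstrs_le {M : ℕ}
    (hgrd : ∀ t ∈ A.trans, ↑(UTrans.grd t) ⊆ nondiagConstrs X M)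
    (hupd : ∀ t ∈ A.trans, ∀ x, (UTrans.upd t x).IsNonneg) :
    guardStep A (fun _ => nondiagConstrs X M) ≤ fun _ => nondiagConstrs X M := by
  refine fun q => Set.iUnion₂_subset fun t ht => Set.iUnion_subset fun _ => ?_
  have hwp : wpUpdSet (UTrans.upd t) (nondiagConstrs X M) ⊆ nondiagConstrs X M :=
    wpUpdSet_nondiagConstrs_subset (hupd t ht)
  exact Set.union_subset (Set.union_subset (hgrd t ht)
    ((wpUpdSet_mono nonnegConstrs_subset_nondiagConstrs).trans hwp)) hwp

end GuardEquations

theorem stmt17_general {Q X : Type} [Finite X] [DecidableEq X] (A : UTA Q X)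
    (hguards : ∀ t ∈ A.trans, ∀ φ ∈ UTrans.grd t, ¬ φ.isDiag)
    (hupd : ∀ t ∈ A.trans, ∀ x, (UTrans.upd t x).IsNonneg)
    (G : Q → Set (Constr X)) (hG : IsLeast {G' | GuardEqU A G'} G)
    (M : ℕ) (hM : ∀ t ∈ A.trans, ∀ φ ∈ UTrans.grd t, φ.constOf.natAbs ≤ M) :
    (∀ q, ∀ φ ∈ G q, ¬ φ.isDiag ∧ φ.constOf.natAbs ≤ M) ∧ ∀ q, (G q).Finite := by
  have hGM : G ≤ fun _ => nondiagConstrs X M :=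
    le_of_isLeast_guardEqU_of_guardStep_le hG <|
      guardStep_nondiagConstrs_le (fun t ht φ hφ => ⟨hguards t ht φ hφ, hM t ht φ hφ⟩) hupd
  exact ⟨hGM, fun q => (finite_nondiagConstrs X M).subset (hGM q)⟩

theorem stmt17 {Q X : Type} [Fintype Q] [Fintype X] [DecidableEq X] (A : UTA Q X)
    (hguards : ∀ t ∈ A.trans, ∀ φ ∈ UTrans.grd t, ¬ φ.isDiag)
    (hupd : ∀ t ∈ A.trans, ∀ x : X,
      (∃ c : ℕ, UTrans.upd t x = AtomicUp.const c) ∨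
      (∃ (y : X) (d : ℤ), UTrans.upd t x = AtomicUp.add y d ∧ 0 ≤ d))
    (G : Q → Set (Constr X)) (hfix : GuardEqU A G)
    (hleast : ∀ G' : Q → Set (Constr X), GuardEqU A G' → ∀ q, G q ⊆ G' q)
    (M : ℕ)
    (hM : ∀ t ∈ A.trans, (∀ φ ∈ UTrans.grd t, φ.constOf.natAbs ≤ M) ∧
      ∀ x : X, updBound (UTrans.upd t x) ≤ M) :
    (∀ q, ∀ φ ∈ G q, φ.constOf.natAbs ≤ 2 * M) ∧ (∀ q, (G q).Finite) := by
  obtain ⟨hbound, hfin⟩ := stmt17_general A hguards hupd G ⟨hfix, hleast⟩ M fun t ht => (hM t ht).1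
  exact ⟨fun q φ hφ => (hbound q φ hφ).2.trans (Nat.le_mul_of_pos_left M two_pos), hfin⟩
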